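/- Let F be a field, let S be a finite generating system of the full matrix algebra M_n(F), and let k ≥ 2. If the subspace L_k(S) contains a matrix of rank one, then ℓ(S) ≤ 2n + k − 4. -/

import Mathlib

open Polynomial Matrix

/-- The `F`-linear span of all words over `S` of length at most `i`
(the empty word being `1`). -/
def wordSpan (F : Type*) {A : Type*} [Field F] [Ring A] [Algebra F A]
    (S : Set A) (i : ℕ) : Submodule F A :=
  Submodule.span F {x : A | ∃ l : List A, l.length ≤ i ∧ (∀ a ∈ l, a ∈ S) ∧ l.prod = x}

/-- `S` is a generating system of the algebra `A`:
`A` is the union of the subspaces `wordSpan F S i`. -/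
def IsGeneratingSystem (F : Type*) {A : Type*} [Field F] [Ring A] [Algebra F A]
    (S : Set A) : Prop :=
  ∀ x : A, ∃ i : ℕ, x ∈ wordSpan F S i

/-- The length of a generating system `S`: the least `k` with `wordSpan F S k = ⊤`. -/
noncomputable def genLength (F : Type*) {A : Type*} [Field F] [Ring A] [Algebra F A]
    (S : Set A) : ℕ :=
  sInf {k : ℕ | wordSpan F S k = ⊤}

/-!
If the words of length at most `N = 2n + k - 4` do not span, then some `B ≠ 0` satisfies
`tr (B X) = 0` for all `X ∈ L_N`. Writing the rank one matrix of `L_k` as `u vᵀ`, this gives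
`vᵀ X B Y u = 0` for `X ∈ L_i`, `Y ∈ L_j`, `i + j ≤ 2n - 4`. Since `S` generates, the vectors
annihilated by `vᵀ X` for all words `X` of length less than `j` form a space of dimension at most
`n - j`, and dually for `u`. Playing these bounds on both sides against each other at `j = n - 1`
and `j = n - 2` forces `B = a R + R b` with `R = y qᵀ` and `a, b ∈ L_1`.

Now `tr (B Z) = qᵀ (Z a + b Z) y` vanishes on `L_{2n-2}`. This makes `qᵀ X (s - α - β b) Y y` vanish
for all words `X`, `Y` of length less than `n`, where `s ∈ S` and `qᵀ s = α qᵀ + β qᵀ b`. So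
`s = α + β b`, every generator commutes with `b`, and `b` is scalar; but then `qᵀ b` is a multiple
of `qᵀ`, which the rank of `B` excludes.
-/

open Module

section LinearAlgebra

variable {F : Type*} [Field F]

theorem eq_span_pair_of_finrank_le_two {V : Type*} [AddCommGroup V] [Module F V]
    [FiniteDimensional F V] {W : Submodule F V} (hW : finrank F W ≤ 2) {x y : V}
    (hx : x ∈ W) (hy : y ∈ W) (hx0 : x ≠ 0) (hyx : y ∉ Submodule.span F {x}) :
    W = Submodule.span F {x, y} := by
  have hindep : LinearIndependent F ![x, y] :=
    (LinearIndependent.pair_iff' hx0).2 fun c hc =>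
      hyx (Submodule.mem_span_singleton.2 ⟨c, hc⟩)
  have hrank := finrank_span_eq_card hindep
  rw [range_cons_cons_empty, Fintype.card_fin] at hrank
  exact (Submodule.eq_of_le_of_finrank_le (Submodule.span_le.2 (Set.pair_subset hx hy))
    (hW.trans_eq hrank.symm)).symm

variable {m n : Type*} [Fintype n]

theorem exists_eq_vecMulVec_add_vecMulVec_of_mulVec_mem_span_pair {B : Matrix m n F}
    {y z : m → F} (h : ∀ x, B *ᵥ x ∈ Submodule.span F {y, z}) :
    ∃ p q : n → F, B = vecMulVec y p + vecMulVec z q := by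
  classical
  choose p q hpq using fun j => Submodule.mem_span_pair.1 (h (Pi.single j 1))
  refine ⟨p, q, ext_col fun j => ?_⟩
  rw [← mulVec_single_one, ← hpq]
  ext i
  simp [vecMulVec_apply, mul_comm]

theorem rank_le_one_iff_exists_eq_vecMulVec [Finite m] {B : Matrix m n F} :
    B.rank ≤ 1 ↔ ∃ (y : m → F) (t : n → F), B = vecMulVec y t := by
  have := Fintype.ofFinite m
  refine ⟨fun h => ?_, ?_⟩
  · obtain ⟨⟨y, hy⟩⟩ := (Submodule.finrank_le_one_iff_isPrincipal _).1 h
    obtain ⟨p, q, rfl⟩ := exists_eq_vecMulVec_add_vecMulVec_of_mulVec_mem_span_pair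
      (B := B) (y := y) (z := y) fun x => by
        rw [Set.pair_eq_singleton, ← hy]
        exact ⟨x, rfl⟩
    exact ⟨y, p + q, (vecMulVec_add ..).symm⟩
  · rintro ⟨y, t, rfl⟩
    exact rank_vecMulVec_le y t

theorem trace_vecMulVec_mul [Fintype m] (y : m → F) (t : n → F) (X : Matrix n m F) :
    (vecMulVec y t * X).trace = t ⬝ᵥ X *ᵥ y := by
  rw [vecMulVec_mul, trace_vecMulVec, dotProduct_mulVec, dotProduct_comm]

theorem exists_trace_mul_eq_zero_of_ne_top [Fintype m] {W : Submodule F (Matrix m n F)}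
    (hW : W ≠ ⊤) : ∃ B : Matrix n m F, B ≠ 0 ∧ ∀ X ∈ W, (B * X).trace = 0 := by
  classical
  obtain ⟨f, hf, hWf⟩ := Submodule.exists_le_ker_of_lt_top _ hW.lt_top
  have hfB (X) : f X = ((of fun i j => f (single j i 1)) * X).trace := by
    induction X using Matrix.induction_on' with
    | h_zero => simp
    | h_add X Y hX hY => rw [map_add, hX, hY, Matrix.mul_add, trace_add]
    | h_std_basis i j c =>
      have hc : single i j c = c • single i j (1 : F) := by rw [smul_single, smul_eq_mul, mul_one]
      rw [hc, map_smul, Matrix.mul_smul, trace_smul, trace_mul_single, of_apply, op_smul_eq_mul,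
        mul_one]
  refine ⟨_, fun hB => hf (LinearMap.ext fun X => ?_), fun X hX => (hfB X).symm.trans (hWf hX)⟩
  rw [hfB, hB, Matrix.zero_mul, trace_zero, LinearMap.zero_apply]

end LinearAlgebra

section WordSpan

variable {F A : Type*} [Field F] [Ring A] [Algebra F A] {S : Set A}

theorem wordSpan_eq_span_pow (i : ℕ) :
    wordSpan F S i = Submodule.span F (insert 1 S) ^ i := by
  induction i with
  | zero =>
    rw [pow_zero, Submodule.one_eq_span, wordSpan]
    congr 1
    ext x
    simp [eq_comm]
  | succ i ih =>
    rw [pow_succ', ← ih, wordSpan, wordSpan, Submodule.span_mul_span]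
    congr 1
    ext x
    rw [Set.mem_mul]
    constructor
    · rintro ⟨_ | ⟨s, l⟩, hlen, hl, rfl⟩
      · exact ⟨1, Set.mem_insert .., 1, ⟨[], by simp⟩, by simp⟩
      · rw [List.forall_mem_cons] at hl
        exact ⟨s, Set.mem_insert_of_mem _ hl.1, l.prod, ⟨l, by simpa using hlen, hl.2, rfl⟩,
          List.prod_cons.symm⟩
    · rintro ⟨s, rfl | hs, _, ⟨l, hlen, hl, rfl⟩, rfl⟩
      · exact ⟨l, by omega, hl, (one_mul _).symm⟩
      · exact ⟨s :: l, by simpa using hlen, List.forall_mem_cons.2 ⟨hs, hl⟩, List.prod_cons⟩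

theorem wordSpan_add (i j : ℕ) : wordSpan F S (i + j) = wordSpan F S i * wordSpan F S j := by
  simp only [wordSpan_eq_span_pow, pow_add]

theorem mul_mem_wordSpan {i j : ℕ} {X Y : A} (hX : X ∈ wordSpan F S i)
    (hY : Y ∈ wordSpan F S j) : X * Y ∈ wordSpan F S (i + j) :=
  wordSpan_add (F := F) (S := S) i j ▸ Submodule.mul_mem_mul hX hY

theorem wordSpan_mono : Monotone (wordSpan F S) := fun _ _ hij =>
  Submodule.span_mono fun _ ⟨l, hlen, hl⟩ => ⟨l, hlen.trans hij, hl⟩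

theorem one_mem_wordSpan (i : ℕ) : (1 : A) ∈ wordSpan F S i :=
  Submodule.subset_span ⟨[], by simp⟩

theorem mem_wordSpan_one {s : A} (hs : s ∈ S) : s ∈ wordSpan F S 1 :=
  Submodule.subset_span ⟨[s], by simpa using hs⟩

theorem IsGeneratingSystem.adjoin_eq_top (hgen : IsGeneratingSystem F S) :
    Algebra.adjoin F S = ⊤ := by
  refine eq_top_iff.2 fun x _ => ?_
  obtain ⟨i, hi⟩ := hgen x
  refine (Submodule.span_le (p := (Algebra.adjoin F S).toSubmodule)).2 ?_ hi
  rintro _ ⟨l, -, hl, rfl⟩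
  exact (Algebra.adjoin F S).list_prod_mem fun a ha => Algebra.subset_adjoin (hl a ha)

end WordSpan

section MatrixAlgebra

variable {F ι : Type*} [Field F] [Fintype ι] [DecidableEq ι] {S : Set (Matrix ι ι F)}

theorem transpose_mem_wordSpan {i : ℕ} {X : Matrix ι ι F} (hX : X ∈ wordSpan F S i) :
    Xᵀ ∈ wordSpan F (transpose ⁻¹' S) i := by
  refine (Submodule.span_le (p := (wordSpan F (transpose ⁻¹' S) i).comap
    (transposeLinearEquiv ι ι F F).toLinearMap)).2 ?_ hX
  rintro _ ⟨l, hlen, hl, rfl⟩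
  refine Submodule.subset_span ⟨(l.map transpose).reverse, by simpa using hlen, ?_,
    (transpose_list_prod l).symm⟩
  simpa using hl

namespace IsGeneratingSystem

theorem transpose (hgen : IsGeneratingSystem F S) :
    IsGeneratingSystem F (Matrix.transpose ⁻¹' S) := fun X =>
  (hgen Xᵀ).imp fun _ hX => transpose_mem_wordSpan hX

theorem eq_bot_or_eq_top_of_mulVec_mem (hgen : IsGeneratingSystem F S)
    {W : Submodule F (ι → F)} (hW : ∀ s ∈ S, ∀ y ∈ W, s *ᵥ y ∈ W) : W = ⊥ ∨ W = ⊤ := by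
  have hinv (X : Matrix ι ι F) : ∀ y ∈ W, X *ᵥ y ∈ W := by
    have hX : X ∈ Algebra.adjoin F S := hgen.adjoin_eq_top ▸ Algebra.mem_top
    induction hX using Algebra.adjoin_induction with
    | mem s hs => exact hW s hs
    | algebraMap c =>
      intro y hy
      rw [Algebra.algebraMap_eq_smul_one, smul_mulVec, one_mulVec]
      exact W.smul_mem c hy
    | add X Y _ _ hX hY => exact fun y hy => add_mulVec X Y y ▸ W.add_mem (hX y hy) (hY y hy)
    | mul X Y _ _ hX hY => exact fun y hy => mulVec_mulVec y X Y ▸ hX _ (hY y hy)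
  refine or_iff_not_imp_left.2 fun hbot => eq_top_iff.2 fun x _ => ?_
  obtain ⟨y, hyW, hy0⟩ := W.exists_mem_ne_zero_of_ne_bot hbot
  obtain ⟨j, hj⟩ := Function.ne_iff.1 hy0
  simpa [vecMulVec_mulVec, inv_mul_cancel₀ hj] using
    hinv (vecMulVec x (Pi.single j (y j)⁻¹)) y hyW

theorem exists_mulVec_notMem_span (hgen : IsGeneratingSystem F S)
    (hι : 1 < Fintype.card ι) {y : ι → F} (hy : y ≠ 0) :
    ∃ a ∈ S, a *ᵥ y ∉ Submodule.span F {y} := by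
  by_contra! h
  rcases hgen.eq_bot_or_eq_top_of_mulVec_mem (W := Submodule.span F {y}) (fun s hs z hz => by
    obtain ⟨c, rfl⟩ := Submodule.mem_span_singleton.1 hz
    exact mulVec_smul s c y ▸ Submodule.smul_mem _ c (h s hs)) with hbot | htop
  · exact hy (Submodule.span_singleton_eq_bot.1 hbot)
  · have := finrank_span_singleton (K := F) hy
    rw [htop, finrank_top, finrank_fintype_fun_eq_card] at this
    omega

theorem exists_vecMul_notMem_span (hgen : IsGeneratingSystem F S)
    (hι : 1 < Fintype.card ι) {q : ι → F} (hq : q ≠ 0) :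
    ∃ b ∈ S, q ᵥ* b ∉ Submodule.span F {q} := by
  obtain ⟨b, hb, hqb⟩ := hgen.transpose.exists_mulVec_notMem_span hι hq
  exact ⟨bᵀ, hb, vecMul_transpose b q ▸ hqb⟩

theorem mem_range_scalar_of_subset_span_pair (hgen : IsGeneratingSystem F S) {b : Matrix ι ι F}
    (h : S ⊆ Submodule.span F {1, b}) : b ∈ Set.range (Matrix.scalar ι (α := F)) := by
  have hcomm (X : Matrix ι ι F) : X ∈ Subalgebra.centralizer F {b} := by
    refine Algebra.adjoin_le (fun s hs => ?_) (hgen.adjoin_eq_top ▸ Algebra.mem_top)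
    obtain ⟨α, β, rfl⟩ := Submodule.mem_span_pair.1 (h hs)
    have hb : b ∈ Subalgebra.centralizer F {b} := by simp [Subalgebra.mem_centralizer_iff]
    exact add_mem (Subalgebra.smul_mem _ (one_mem _) α) (Subalgebra.smul_mem _ hb β)
  exact mem_range_scalar_iff_commute_single'.2 fun i j =>
    ((Subalgebra.mem_centralizer_iff F).1 (hcomm (single i j 1)) b rfl).symm

end IsGeneratingSystem

/-- The subspace of vectors `y` such that `vᵀ X y = 0` for all words `X` over `S` of length
strictly less than `j`. The strict bound makes it everything for `j = 0`. Row vectors are treated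
by passing to the set of transposes of `S`. -/
def wordAnnihilator (S : Set (Matrix ι ι F)) (v : ι → F) (j : ℕ) : Submodule F (ι → F) where
  carrier := {y | ∀ i < j, ∀ X ∈ wordSpan F S i, v ⬝ᵥ X *ᵥ y = 0}
  zero_mem' _ _ X _ := by rw [mulVec_zero, dotProduct_zero]
  add_mem' hy hz i hi X hX := by
    rw [mulVec_add, dotProduct_add, hy i hi X hX, hz i hi X hX, add_zero]
  smul_mem' c y hy i hi X hX := by
    rw [mulVec_smul, dotProduct_smul, hy i hi X hX, smul_zero]

variable {u v : ι → F}

theorem mem_wordAnnihilator_transpose {j : ℕ} {t : ι → F} :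
    t ∈ wordAnnihilator (transpose ⁻¹' S) u j ↔
      ∀ i < j, ∀ X ∈ wordSpan F S i, t ⬝ᵥ X *ᵥ u = 0 := by
  have hswap (X : Matrix ι ι F) : u ⬝ᵥ X *ᵥ t = t ⬝ᵥ Xᵀ *ᵥ u := by
    rw [mulVec_transpose, dotProduct_mulVec, dotProduct_comm]
  refine forall₂_congr fun i _ => ⟨fun h X hX => ?_, fun h X hX => ?_⟩
  · rw [← transpose_transpose X, ← hswap]
    exact h _ (transpose_mem_wordSpan hX)
  · rw [hswap]
    exact h _ (transpose_mem_wordSpan (S := transpose ⁻¹' S) hX)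

theorem wordAnnihilator_anti : Antitone (wordAnnihilator S v) :=
  fun _ _ hij _ hy i hi => hy i (hi.trans_le hij)

theorem mulVec_mem_wordAnnihilator {j : ℕ} {s : Matrix ι ι F} {y : ι → F}
    (hs : s ∈ wordSpan F S 1) (hy : y ∈ wordAnnihilator S v (j + 1)) :
    s *ᵥ y ∈ wordAnnihilator S v j := fun i hi X hX => by
  rw [mulVec_mulVec]
  exact hy (i + 1) (by omega) _ (mul_mem_wordSpan hX hs)

theorem vecMul_mem_wordAnnihilator_transpose {j : ℕ} {s : Matrix ι ι F} {t : ι → F}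
    (hs : s ∈ wordSpan F S 1) (ht : t ∈ wordAnnihilator (transpose ⁻¹' S) u (j + 1)) :
    t ᵥ* s ∈ wordAnnihilator (transpose ⁻¹' S) u j :=
  mulVec_transpose s t ▸ mulVec_mem_wordAnnihilator (transpose_mem_wordSpan hs) ht

namespace IsGeneratingSystem

-- A stationary step of the chain is an invariant subspace, hence zero.
theorem finrank_wordAnnihilator_le (hgen : IsGeneratingSystem F S) (hv : v ≠ 0) (j : ℕ) :
    finrank F (wordAnnihilator S v j) ≤ Fintype.card ι - j := by
  induction j with
  | zero => simpa using (wordAnnihilator S v 0).finrank_le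
  | succ j ih =>
    have hle : wordAnnihilator S v (j + 1) ≤ wordAnnihilator S v j :=
      wordAnnihilator_anti j.le_succ
    rcases hle.eq_or_lt with heq | hlt
    · rcases hgen.eq_bot_or_eq_top_of_mulVec_mem (W := wordAnnihilator S v (j + 1))
        fun s hs y hy => heq ▸ mulVec_mem_wordAnnihilator (mem_wordSpan_one hs) hy
        with hbot | htop
      · rw [hbot, finrank_bot]
        exact Nat.zero_le _
      · refine absurd (dotProduct_eq_zero v fun y => ?_) hv
        simpa using (htop ▸ Submodule.mem_top : y ∈ wordAnnihilator S v (j + 1)) 0 j.succ_pos 1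
          (one_mem_wordSpan 0)
    · have := Submodule.finrank_lt_finrank_of_lt hlt
      omega

theorem wordAnnihilator_eq_bot (hgen : IsGeneratingSystem F S) (hv : v ≠ 0) {j : ℕ}
    (hj : Fintype.card ι ≤ j) : wordAnnihilator S v j = ⊥ := by
  have := hgen.finrank_wordAnnihilator_le hv j
  exact Submodule.finrank_eq_zero.1 (by omega)

theorem wordAnnihilator_le_span_singleton (hgen : IsGeneratingSystem F S) (hv : v ≠ 0) {j : ℕ}
    (hj : Fintype.card ι ≤ j + 1) {y : ι → F} (hy : y ∈ wordAnnihilator S v j) (hy0 : y ≠ 0) :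
    wordAnnihilator S v j ≤ Submodule.span F {y} := by
  have hrank := hgen.finrank_wordAnnihilator_le hv j
  refine (Submodule.eq_of_le_of_finrank_le (Submodule.span_le.2 (by simpa using hy)) ?_).ge
  rw [finrank_span_singleton hy0]
  omega

theorem wordAnnihilator_eq_span_pair (hgen : IsGeneratingSystem F S) (hv : v ≠ 0) {j : ℕ}
    (hj : Fintype.card ι ≤ j + 2) {y z : ι → F} (hy : y ∈ wordAnnihilator S v j) (hy0 : y ≠ 0)
    (hz : z ∈ wordAnnihilator S v j) (hzy : z ∉ Submodule.span F {y}) :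
    wordAnnihilator S v j = Submodule.span F {y, z} := by
  have hrank := hgen.finrank_wordAnnihilator_le hv j
  exact eq_span_pair_of_finrank_le_two (by omega) hy hz hy0 hzy

theorem eq_zero_of_dotProduct_mul_mul_mulVec_eq_zero (hgen : IsGeneratingSystem F S) {q y : ι → F}
    (hq : q ≠ 0) (hy : y ≠ 0) {K : Matrix ι ι F}
    (h : ∀ i < Fintype.card ι, ∀ X ∈ wordSpan F S i, ∀ j < Fintype.card ι, ∀ Y ∈ wordSpan F S j,
      q ⬝ᵥ (X * K * Y) *ᵥ y = 0) : K = 0 := by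
  have hcol {j} (hj : j < Fintype.card ι) {Y} (hY : Y ∈ wordSpan F S j) : K *ᵥ Y *ᵥ y = 0 := by
    refine (Submodule.mem_bot F).1 ((hgen.wordAnnihilator_eq_bot hq le_rfl).le ?_)
    intro i hi X hX
    simpa only [mulVec_mulVec, mul_assoc] using h i hi X hX j hj Y hY
  refine ext_row fun i => (Submodule.mem_bot F).1
    ((hgen.transpose.wordAnnihilator_eq_bot hy le_rfl).le ?_)
  exact mem_wordAnnihilator_transpose.2 fun j hj Y hY => congrFun (hcol hj hY) i

theorem one_lt_rank_of_trace_mul_eq_zero (hgen : IsGeneratingSystem F S) {N : ℕ}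
    (hN : Fintype.card ι ≤ N + 1) {B : Matrix ι ι F} (hB0 : B ≠ 0)
    (hB : ∀ X ∈ wordSpan F S N, (B * X).trace = 0) : 1 < B.rank := by
  by_contra! hrank
  obtain ⟨y, t, rfl⟩ := rank_le_one_iff_exists_eq_vecMulVec.1 hrank
  obtain ⟨hy, ht⟩ := not_or.1 (mt vecMulVec_eq_zero.2 hB0)
  refine hy ((Submodule.mem_bot F).1 ((hgen.wordAnnihilator_eq_bot ht hN).le fun i hi X hX => ?_))
  rw [← trace_vecMulVec_mul]
  exact hB X (wordSpan_mono (by omega) hX)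

end IsGeneratingSystem

section Compression

variable {B : Matrix ι ι F} {d : ℕ}

theorem dotProduct_mul_mul_mulVec_eq_zero_of_vecMulVec_mem_wordSpan {k N : ℕ}
    (hM : vecMulVec u v ∈ wordSpan F S k) (hB : ∀ X ∈ wordSpan F S N, (B * X).trace = 0)
    {i j : ℕ} (hij : i + j + k ≤ N) {X Y : Matrix ι ι F} (hX : X ∈ wordSpan F S i)
    (hY : Y ∈ wordSpan F S j) : v ⬝ᵥ (X * B * Y) *ᵥ u = 0 := by
  have hYMX : Y * vecMulVec u v * X ∈ wordSpan F S N :=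
    wordSpan_mono (by omega) (mul_mem_wordSpan (mul_mem_wordSpan hY hM) hX)
  calc v ⬝ᵥ (X * B * Y) *ᵥ u = (vecMulVec u v * (X * B * Y)).trace :=
        (trace_vecMulVec_mul u v _).symm
    _ = (B * (Y * vecMulVec u v * X)).trace := by
        rw [trace_mul_comm B, trace_mul_comm (vecMulVec u v), mul_assoc (X * B),
          trace_mul_comm (X * B)]
        simp only [mul_assoc]
    _ = 0 := hB _ hYMX

theorem mulVec_mulVec_mem_wordAnnihilator
    (h : ∀ i j, i + j ≤ d → ∀ X ∈ wordSpan F S i, ∀ Y ∈ wordSpan F S j,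
      v ⬝ᵥ (X * B * Y) *ᵥ u = 0) {j k : ℕ} (hjk : j + k ≤ d + 1) {Y : Matrix ι ι F}
    (hY : Y ∈ wordSpan F S j) : B *ᵥ Y *ᵥ u ∈ wordAnnihilator S v k := fun i hi X hX => by
  simpa only [mulVec_mulVec, mul_assoc] using h i j (by omega) X hX Y hY

namespace IsGeneratingSystem

theorem mulVec_mem_wordAnnihilator_of_dotProduct_eq_zero (hgen : IsGeneratingSystem F S)
    (hu : u ≠ 0)
    (h : ∀ i j, i + j ≤ d → ∀ X ∈ wordSpan F S i, ∀ Y ∈ wordSpan F S j,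
      v ⬝ᵥ (X * B * Y) *ᵥ u = 0) {k : ℕ} (hk : Fintype.card ι + k ≤ d + 2) (x : ι → F) :
    B *ᵥ x ∈ wordAnnihilator S v k := fun i hi X hX => by
  have hrow : v ᵥ* (X * B) = 0 := (Submodule.mem_bot F).1 <|
    (hgen.transpose.wordAnnihilator_eq_bot hu le_rfl).le <|
      mem_wordAnnihilator_transpose.2 fun j hj Y hY => by
        rw [← dotProduct_mulVec, mulVec_mulVec]
        exact h i j (by omega) X hX Y hY
  rw [mulVec_mulVec, dotProduct_mulVec, hrow, zero_dotProduct]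

variable {m : ℕ}

theorem exists_mem_wordAnnihilator_ne_zero (hgen : IsGeneratingSystem F S) (hu : u ≠ 0)
    (hι : Fintype.card ι = m + 2) (hB : 1 < B.rank)
    (h : ∀ i j, i + j ≤ 2 * m → ∀ X ∈ wordSpan F S i, ∀ Y ∈ wordSpan F S j,
      v ⬝ᵥ (X * B * Y) *ᵥ u = 0) : ∃ y ∈ wordAnnihilator S v (m + 1), y ≠ 0 := by
  by_contra! hzero
  have hBY {j} (hj : j < m + 1) {Y} (hY : Y ∈ wordSpan F S j) : B *ᵥ Y *ᵥ u = 0 :=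
    hzero _ (mulVec_mulVec_mem_wordAnnihilator h (by omega) hY)
  have hrange : Bᵀ.mulVecLin.range ≤ wordAnnihilator (Matrix.transpose ⁻¹' S) u (m + 1) := by
    rintro _ ⟨x, rfl⟩
    refine mem_wordAnnihilator_transpose.2 fun j hj Y hY => ?_
    rw [mulVecLin_apply, mulVec_transpose, ← dotProduct_mulVec, hBY hj hY, dotProduct_zero]
  have := Submodule.finrank_mono hrange
  have := hgen.transpose.finrank_wordAnnihilator_le hu (m + 1)
  rw [← rank_transpose, Matrix.rank] at hB
  omega

theorem exists_eq_vecMulVec_add_vecMulVec_mulVec (hgen : IsGeneratingSystem F S) (hu : u ≠ 0)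
    (hv : v ≠ 0) (hι : Fintype.card ι = m + 2) (hB : 1 < B.rank)
    (h : ∀ i j, i + j ≤ 2 * m → ∀ X ∈ wordSpan F S i, ∀ Y ∈ wordSpan F S j,
      v ⬝ᵥ (X * B * Y) *ᵥ u = 0) :
    ∃ y ≠ 0, ∃ a ∈ S, ∃ p ∈ wordAnnihilator (Matrix.transpose ⁻¹' S) u m,
      ∃ q ∈ wordAnnihilator (Matrix.transpose ⁻¹' S) u (m + 1),
        B = vecMulVec y p + vecMulVec (a *ᵥ y) q := by
  obtain ⟨y, hy, hy0⟩ := hgen.exists_mem_wordAnnihilator_ne_zero hu hι hB h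
  obtain ⟨a, ha, hay⟩ := hgen.exists_mulVec_notMem_span (by omega) hy0
  have hspan : wordAnnihilator S v m = Submodule.span F {y, a *ᵥ y} :=
    hgen.wordAnnihilator_eq_span_pair hv hι.le (wordAnnihilator_anti m.le_succ hy) hy0
      (mulVec_mem_wordAnnihilator (mem_wordSpan_one ha) hy) hay
  obtain ⟨p, q, hpq⟩ := exists_eq_vecMulVec_add_vecMulVec_of_mulVec_mem_span_pair fun x =>
    hspan ▸ hgen.mulVec_mem_wordAnnihilator_of_dotProduct_eq_zero hu h (k := m) (by omega) x
  have hBw (w : ι → F) : B *ᵥ w = (p ⬝ᵥ w) • y + (q ⬝ᵥ w) • a *ᵥ y := by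
    simp only [hpq, add_mulVec, vecMulVec_mulVec, op_smul_eq_smul]
  have hq {j} (hj : j < m + 1) {Y} (hY : Y ∈ wordSpan F S j) : q ⬝ᵥ Y *ᵥ u = 0 := by
    have hBY := hgen.wordAnnihilator_le_span_singleton hv (by omega) hy hy0
      (mulVec_mulVec_mem_wordAnnihilator h (by omega) hY)
    rw [hBw, Submodule.add_mem_iff_right _
      (Submodule.smul_mem _ _ (Submodule.mem_span_singleton_self y))] at hBY
    by_contra hne
    exact hay ((Submodule.smul_mem_iff _ hne).1 hBY)
  have hp {j} (hj : j < m) {Y} (hY : Y ∈ wordSpan F S j) : p ⬝ᵥ Y *ᵥ u = 0 := by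
    have hBY : B *ᵥ Y *ᵥ u = 0 := (Submodule.mem_bot F).1 <|
      (hgen.wordAnnihilator_eq_bot hv hι.le).le
        (mulVec_mulVec_mem_wordAnnihilator h (by omega) hY)
    rw [hBw, hq (by omega) hY, zero_smul, add_zero] at hBY
    exact (smul_eq_zero.1 hBY).resolve_right hy0
  exact ⟨y, hy0, a, ha, p, mem_wordAnnihilator_transpose.2 fun _ hj _ hY => hp hj hY,
    q, mem_wordAnnihilator_transpose.2 fun _ hj _ hY => hq hj hY, hpq⟩

theorem exists_eq_mul_vecMulVec_add_vecMulVec_mul (hgen : IsGeneratingSystem F S) (hu : u ≠ 0)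
    (hv : v ≠ 0) (hι : Fintype.card ι = m + 2) (hB : 1 < B.rank)
    (h : ∀ i j, i + j ≤ 2 * m → ∀ X ∈ wordSpan F S i, ∀ Y ∈ wordSpan F S j,
      v ⬝ᵥ (X * B * Y) *ᵥ u = 0) :
    ∃ y q, ∃ a ∈ wordSpan F S 1, ∃ b ∈ wordSpan F S 1,
      B = a * vecMulVec y q + vecMulVec y q * b ∧ y ≠ 0 ∧ q ᵥ* b ∉ Submodule.span F {q} ∧
        ∀ s ∈ wordSpan F S 1, q ᵥ* s ∈ Submodule.span F {q, q ᵥ* b} := by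
  obtain ⟨y, hy0, a, ha, p, hp, q, hq, hpq⟩ :=
    hgen.exists_eq_vecMulVec_add_vecMulVec_mulVec hu hv hι hB h
  have hpq_span : p ∉ Submodule.span F {q} := fun hmem => by
    obtain ⟨c, rfl⟩ := Submodule.mem_span_singleton.1 hmem
    rw [vecMulVec_smul, ← smul_vecMulVec, ← add_vecMulVec] at hpq
    exact hB.not_ge (rank_le_one_iff_exists_eq_vecMulVec.2 ⟨_, _, hpq⟩)
  have hq0 : q ≠ 0 := by
    rintro rfl
    rw [vecMulVec_zero, add_zero] at hpq
    exact hB.not_ge (rank_le_one_iff_exists_eq_vecMulVec.2 ⟨_, _, hpq⟩)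
  have hqm := wordAnnihilator_anti m.le_succ hq
  obtain ⟨c, hc, hqc⟩ := hgen.exists_vecMul_notMem_span (by omega) hq0
  have hcm := vecMul_mem_wordAnnihilator_transpose (mem_wordSpan_one (F := F) hc) hq
  obtain ⟨α, β, hαβ⟩ := Submodule.mem_span_pair.1
    ((hgen.transpose.wordAnnihilator_eq_span_pair hu hι.le hqm hq0 hcm hqc).le hp)
  set b : Matrix ι ι F := α • 1 + β • c
  have hqb : q ᵥ* b = p := by rw [vecMul_add, vecMul_smul, vecMul_smul, vecMul_one, hαβ]
  refine ⟨y, q, a, mem_wordSpan_one ha, b, add_mem (Submodule.smul_mem _ α (one_mem_wordSpan 1))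
    (Submodule.smul_mem _ β (mem_wordSpan_one hc)), ?_, hy0, hqb ▸ hpq_span, fun s hs => ?_⟩
  · rw [mul_vecMulVec, vecMulVec_mul, hqb, add_comm, hpq]
  · rw [hqb, ← hgen.transpose.wordAnnihilator_eq_span_pair hu hι.le hqm hq0 hp hpq_span]
    exact vecMul_mem_wordAnnihilator_transpose hs hq

end IsGeneratingSystem

end Compression

section Sandwich

variable {q y : ι → F} {a b : Matrix ι ι F} {d : ℕ}

-- Writing `q r = α q + β q b`, the relation trades a leading `b` for a trailing `-a`, which
-- shortens the left word until it disappears.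
theorem dotProduct_mul_mul_mulVec_eq_zero (ha : a ∈ wordSpan F S 1)
    (hq : ∀ s ∈ wordSpan F S 1, q ᵥ* s ∈ Submodule.span F {q, q ᵥ* b})
    (hab : ∀ Z ∈ wordSpan F S d, q ⬝ᵥ (Z * a + b * Z) *ᵥ y = 0) {K : Matrix ι ι F}
    (hK : K ∈ wordSpan F S 1) (hqK : q ᵥ* K = 0) {i j : ℕ} (hij : i + j ≤ d)
    {X Y : Matrix ι ι F} (hX : X ∈ wordSpan F S i) (hY : Y ∈ wordSpan F S j) :
    q ⬝ᵥ (X * K * Y) *ᵥ y = 0 := by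
  induction i generalizing j X Y with
  | zero =>
    rw [wordSpan_eq_span_pow, pow_zero] at hX
    obtain ⟨c, rfl⟩ := Submodule.mem_one.1 hX
    rw [Algebra.algebraMap_eq_smul_one, smul_mul_assoc, one_mul, dotProduct_mulVec,
      ← vecMul_vecMul, vecMul_smul, hqK, smul_zero, zero_vecMul, zero_dotProduct]
  | succ i ih =>
    rw [add_comm, wordSpan_add] at hX
    refine Submodule.mul_induction_on hX (fun r hr X hX => ?_) (fun X X' hX hX' => ?_)
    · have hXKY := ih (by omega) hX hY
      have hXKYa : q ⬝ᵥ (X * K * Y * a) *ᵥ y = 0 := by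
        simpa only [mul_assoc] using ih (by omega) hX (mul_mem_wordSpan hY ha)
      have hbXKY : q ⬝ᵥ (b * (X * K * Y)) *ᵥ y = 0 := by
        simpa only [add_mulVec, dotProduct_add, hXKYa, zero_add] using hab (X * K * Y)
          (wordSpan_mono (by omega) (mul_mem_wordSpan (mul_mem_wordSpan hX hK) hY))
      obtain ⟨α, β, hαβ⟩ := Submodule.mem_span_pair.1 (hq r hr)
      rw [mul_assoc r, mul_assoc r, ← mulVec_mulVec, dotProduct_mulVec, ← hαβ, add_dotProduct,
        smul_dotProduct, smul_dotProduct, ← dotProduct_mulVec, mulVec_mulVec, hXKY, hbXKY,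
        smul_zero, smul_zero, add_zero]
    · rw [add_mul, add_mul, add_mulVec, dotProduct_add, hX, hX', add_zero]

namespace IsGeneratingSystem

theorem subset_span_one_pair (hgen : IsGeneratingSystem F S) (hq0 : q ≠ 0) (hy0 : y ≠ 0)
    (ha : a ∈ wordSpan F S 1) (hb : b ∈ wordSpan F S 1)
    (hq : ∀ s ∈ wordSpan F S 1, q ᵥ* s ∈ Submodule.span F {q, q ᵥ* b})
    (hd : 2 * Fintype.card ι ≤ d + 2)
    (hab : ∀ Z ∈ wordSpan F S d, q ⬝ᵥ (Z * a + b * Z) *ᵥ y = 0) :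
    S ⊆ Submodule.span F {1, b} := fun s hs => by
  obtain ⟨α, β, hαβ⟩ := Submodule.mem_span_pair.1 (hq s (mem_wordSpan_one hs))
  have hK : s - (α • 1 + β • b) ∈ wordSpan F S 1 :=
    sub_mem (mem_wordSpan_one hs) (add_mem (Submodule.smul_mem _ α (one_mem_wordSpan 1))
      (Submodule.smul_mem _ β hb))
  have hqK : q ᵥ* (s - (α • 1 + β • b)) = 0 := by
    rw [vecMul_sub, vecMul_add, vecMul_smul, vecMul_smul, vecMul_one, hαβ, sub_self]
  have hK0 := hgen.eq_zero_of_dotProduct_mul_mul_mulVec_eq_zero hq0 hy0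
    fun i hi X hX j hj Y hY =>
      dotProduct_mul_mul_mulVec_eq_zero ha hq hab hK hqK (by omega) hX hY
  exact Submodule.mem_span_pair.2 ⟨α, β, (sub_eq_zero.1 hK0).symm⟩

theorem vecMul_mem_span_singleton (hgen : IsGeneratingSystem F S) (hy0 : y ≠ 0)
    (ha : a ∈ wordSpan F S 1) (hb : b ∈ wordSpan F S 1)
    (hq : ∀ s ∈ wordSpan F S 1, q ᵥ* s ∈ Submodule.span F {q, q ᵥ* b})
    (hd : 2 * Fintype.card ι ≤ d + 2)
    (hab : ∀ Z ∈ wordSpan F S d, q ⬝ᵥ (Z * a + b * Z) *ᵥ y = 0) :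
    q ᵥ* b ∈ Submodule.span F {q} := by
  rcases eq_or_ne q 0 with rfl | hq0
  · simp
  · obtain ⟨c, rfl⟩ := hgen.mem_range_scalar_of_subset_span_pair
      (hgen.subset_span_one_pair hq0 hy0 ha hb hq hd hab)
    exact Submodule.mem_span_singleton.2 ⟨c, by simp [← smul_one_eq_diagonal, vecMul_smul]⟩

end IsGeneratingSystem

end Sandwich

theorem length_le_of_rank_one_in_Lk_general (hgen : IsGeneratingSystem F S) {k : ℕ} (hk : 2 ≤ k)
    {M : Matrix ι ι F} (hM : M ∈ wordSpan F S k) (hrank : M.rank = 1) :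
    genLength F S ≤ 2 * Fintype.card ι + k - 4 := by
  refine Nat.sInf_le (by_contra fun htop => ?_)
  obtain ⟨B, hB0, hB⟩ := exists_trace_mul_eq_zero_of_ne_top htop
  have hBrank : 1 < B.rank := hgen.one_lt_rank_of_trace_mul_eq_zero (by omega) hB0 hB
  obtain ⟨m, hm⟩ := Nat.exists_eq_add_of_le' (hBrank.trans_le B.rank_le_card_width)
  obtain ⟨u, v, rfl⟩ := rank_le_one_iff_exists_eq_vecMulVec.1 hrank.le
  obtain ⟨hu, hv⟩ : u ≠ 0 ∧ v ≠ 0 := by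
    rw [← not_or, ← vecMulVec_eq_zero]
    exact fun h0 => by simp [h0] at hrank
  obtain ⟨y, q, a, ha, b, hb, rfl, hy0, hqb, hq⟩ :=
    hgen.exists_eq_mul_vecMulVec_add_vecMulVec_mul hu hv hm hBrank fun i j hij X hX Y hY =>
      dotProduct_mul_mul_mulVec_eq_zero_of_vecMulVec_mem_wordSpan hM hB (by omega) hX hY
  refine hqb (hgen.vecMul_mem_span_singleton (d := 2 * Fintype.card ι + k - 4) hy0 ha hb hq
    (by omega) fun Z hZ => ?_)
  rw [← trace_vecMulVec_mul, mul_add, trace_add, ← hB Z hZ, add_mul, trace_add, mul_assoc a,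
    trace_mul_comm a, mul_assoc, mul_assoc]

end MatrixAlgebra

theorem length_le_of_rank_one_in_Lk
    (F : Type*) [Field F] (n : ℕ)
    (S : Finset (Matrix (Fin n) (Fin n) F))
    (hgen : IsGeneratingSystem F (S : Set (Matrix (Fin n) (Fin n) F)))
    (k : ℕ) (hk : 2 ≤ k)
    (M : Matrix (Fin n) (Fin n) F)
    (hM : M ∈ wordSpan F (S : Set (Matrix (Fin n) (Fin n) F)) k)
    (hrank : M.rank = 1) :
    genLength F (S : Set (Matrix (Fin n) (Fin n) F)) ≤ 2 * n + k - 4 := by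
  simpa only [Fintype.card_fin] using length_le_of_rank_one_in_Lk_general hgen hk hM hrank
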